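/- Fix h > 0. For t ∈ ℝ and f : ℝ → ℂ smooth, define (H f)(x) = ½(−h² f''(x) + x² f(x)) and (B_t f)(x) = (cos²t − sin²t)(−h² f''(x) − x² f(x)) − 4 sin t cos t (−i h x f'(x) − (i h/2) f(x)), and define (Ḃ_t f)(x) = −4 cos t sin t (−h² f''(x) − x² f(x)) − 4(cos²t − sin²t)(−i h x f'(x) − (i h/2) f(x)) (the t-derivative of B_t f). Then for every smooth f : ℝ → ℂ, every t ∈ ℝ and every x ∈ ℝ, the commutator identity H(B_t f)(x) − B_t(H f)(x) = −i h (Ḃ_t f)(x) holds. -/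

import Mathlib

open Real

/-!
For quadratic symbols the Moyal bracket has no correction beyond the Poisson bracket
`{p, b} = ∂_ξ p ∂_x b - ∂_x p ∂_ξ b`, so the commutator `[H, B_t]` is exactly `-ih` times the Weyl
quantization of `{½(ξ² + x²), b_t}`. This bracket is `∂_t b_t`, because `b_t` is `ξ² - x²` transported
along the rotation generated by `½(ξ² + x²)`. Concretely, both compositions expand by the Leibniz
rule (`deriv_quadratic_op`) into combinations of `f` and its derivatives up to order four with
polynomial coefficients, and the coefficients are compared.
-/

noncomputable section

/-- The semiclassical harmonic oscillator `H = ½((hD_x)² + x²)`, i.e.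
`(Hf)(x) = ½(−h² f''(x) + x² f(x))`. -/
def Hop (h : ℝ) (f : ℝ → ℂ) (x : ℝ) : ℂ :=
  (1 / 2) * (-(h : ℂ) ^ 2 * deriv (deriv f) x + (x : ℂ) ^ 2 * f x)

/-- The Weyl quantization `B_t` of the rotated symbol
`b_t(x,ξ) = (cos²t − sin²t)(ξ² − x²) − 4xξ sin t cos t`, written as a
differential operator. -/
def Bop (h t : ℝ) (f : ℝ → ℂ) (x : ℝ) : ℂ :=
  ((Real.cos t ^ 2 - Real.sin t ^ 2 : ℝ) : ℂ) *
      (-(h : ℂ) ^ 2 * deriv (deriv f) x - (x : ℂ) ^ 2 * f x)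
    - 4 * (Real.sin t : ℂ) * (Real.cos t : ℂ) *
      (-Complex.I * (h : ℂ) * (x : ℂ) * deriv f x - Complex.I * (h : ℂ) / 2 * f x)

/-- The `t`-derivative `Ḃ_t` of `B_t`. -/
def Bdot (h t : ℝ) (f : ℝ → ℂ) (x : ℝ) : ℂ :=
  -4 * (Real.cos t : ℂ) * (Real.sin t : ℂ) *
      (-(h : ℂ) ^ 2 * deriv (deriv f) x - (x : ℂ) ^ 2 * f x)
    - 4 * ((Real.cos t ^ 2 - Real.sin t ^ 2 : ℝ) : ℂ) *
      (-Complex.I * (h : ℂ) * (x : ℂ) * deriv f x - Complex.I * (h : ℂ) / 2 * f x)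

/-- The first two derivatives of `α f'' + β x² f + γ x f' + δ f` for constants `α β γ δ`: both `H f`
and `B_t f` have this shape, which determines the compositions `H B_t f` and `B_t H f` in terms of
the derivatives of `f` up to order four. -/
theorem deriv_quadratic_op (f : ℝ → ℂ) (hf : ContDiff ℝ (⊤ : ℕ∞) f) (α β γ δ : ℂ)
    (g : ℝ → ℂ)
    (hg : ∀ x : ℝ, g x = α * deriv (deriv f) x + β * ((x : ℂ) ^ 2 * f x)
      + γ * ((x : ℂ) * deriv f x) + δ * f x) :
    (∀ x : ℝ, deriv g x = α * deriv (deriv (deriv f)) x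
      + β * (2 * (x : ℂ) * f x + (x : ℂ) ^ 2 * deriv f x)
      + γ * (deriv f x + (x : ℂ) * deriv (deriv f) x) + δ * deriv f x) ∧
    (∀ x : ℝ, deriv (deriv g) x = α * deriv (deriv (deriv (deriv f))) x
      + β * (2 * f x + 4 * (x : ℂ) * deriv f x + (x : ℂ) ^ 2 * deriv (deriv f) x)
      + γ * (2 * deriv (deriv f) x + (x : ℂ) * deriv (deriv (deriv f)) x)
      + δ * deriv (deriv f) x) := by
  have smooth_deriv : ∀ u : ℝ → ℂ, ContDiff ℝ (⊤ : ℕ∞) u → ContDiff ℝ (⊤ : ℕ∞) (deriv u) :=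
    fun u hu => (contDiff_infty_iff_deriv.1 hu).2
  have hasDeriv : ∀ u : ℝ → ℂ, ContDiff ℝ (⊤ : ℕ∞) u → ∀ x, HasDerivAt u (deriv u x) x :=
    fun u hu x => ((contDiff_infty_iff_deriv.1 hu).1 x).hasDerivAt
  have h1 := smooth_deriv f hf
  have h2 := smooth_deriv _ h1
  have h3 := smooth_deriv _ h2
  have hX : ∀ x : ℝ, HasDerivAt (fun y : ℝ => (y : ℂ)) 1 x := fun x => Complex.ofRealCLM.hasDerivAt
  have hX2 : ∀ x : ℝ, HasDerivAt (fun y : ℝ => (y : ℂ) ^ 2) (2 * (x : ℂ)) x := fun x => by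
    simpa using (hX x).fun_pow 2
  have key1 : ∀ x : ℝ, deriv g x = α * deriv (deriv (deriv f)) x
      + β * (2 * (x : ℂ) * f x + (x : ℂ) ^ 2 * deriv f x)
      + γ * (deriv f x + (x : ℂ) * deriv (deriv f) x) + δ * deriv f x := by
    intro x
    have H := ((((hasDeriv _ h2 x).const_mul α).fun_add
      (((hX2 x).fun_mul (hasDeriv f hf x)).const_mul β)).fun_add
      (((hX x).fun_mul (hasDeriv _ h1 x)).const_mul γ)).fun_add ((hasDeriv f hf x).const_mul δ)
    rw [funext hg, H.deriv]
    ring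
  refine ⟨key1, fun x => ?_⟩
  have H := ((((hasDeriv _ h3 x).const_mul α).fun_add
      (((((hX x).const_mul 2).fun_mul (hasDeriv f hf x)).fun_add
        ((hX2 x).fun_mul (hasDeriv _ h1 x))).const_mul β)).fun_add
      (((hasDeriv _ h1 x).fun_add ((hX x).fun_mul (hasDeriv _ h2 x))).const_mul γ)).fun_add
      ((hasDeriv _ h1 x).const_mul δ)
  rw [funext key1, H.deriv]
  ring

/-- **Exact Egorov commutator identity.**  For every smooth `f : ℝ → ℂ`, every
`t` and every `x`, `H(B_t f)(x) − B_t(H f)(x) = −ih (Ḃ_t f)(x)`. -/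
theorem stmt6 (h : ℝ) (hh : 0 < h) :
    ∀ f : ℝ → ℂ, ContDiff ℝ (⊤ : ℕ∞) f → ∀ t x : ℝ,
      Hop h (Bop h t f) x - Bop h t (Hop h f) x
        = -Complex.I * (h : ℂ) * Bdot h t f x := by
  intro f hf t x
  obtain ⟨hH1, hH2⟩ := deriv_quadratic_op f hf (-(h : ℂ) ^ 2 / 2) (1 / 2) 0 0 (Hop h f)
    (fun x => by unfold Hop; ring)
  obtain ⟨-, hB2⟩ := deriv_quadratic_op f hf
    (-((Real.cos t ^ 2 - Real.sin t ^ 2 : ℝ) : ℂ) * (h : ℂ) ^ 2)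
    (-((Real.cos t ^ 2 - Real.sin t ^ 2 : ℝ) : ℂ))
    (4 * (Real.sin t : ℂ) * (Real.cos t : ℂ) * Complex.I * (h : ℂ))
    (2 * (Real.sin t : ℂ) * (Real.cos t : ℂ) * Complex.I * (h : ℂ)) (Bop h t f)
    (fun x => by unfold Bop; ring)
  rw [Hop, hB2, Bop, Bop, hH1, hH2]
  unfold Bdot Hop
  -- On the right, `-I h` meets the factor `-I h` of the quantization of `xξ`; this is the only `I ^ 2`.
  linear_combination 4 * ((Real.cos t ^ 2 - Real.sin t ^ 2 : ℝ) : ℂ) * (h : ℂ) ^ 2 *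
    ((x : ℂ) * deriv f x + f x / 2) * Complex.I_sq

end
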